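/- Let A = K[x_1,…,x_s] and A_n its Hasse-Schmidt algebra of order n. For α = (α_i^j) ∈ ℕ^{s(n+1)}, set λ_α = Σ_{i,j} j·α_i^j and α̂ = (Σ_j α_1^j, …, Σ_j α_s^j) ∈ ℕ^s. If 0 ≤ λ_α ≤ l ≤ n, then as maps on K[x_1,…,x_s] one has (∂^α/∂x^α) ∘ d_l = d_{l−λ_α} ∘ (∂^{α̂}/∂x^{α̂}), where ∂^α/∂x^α = Π_{i,j} (∂/∂x_i^{(j)})^{α_i^j} and ∂^{α̂}/∂x^{α̂} = Π_i (∂/∂x_i)^{α̂_i}. -/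

import Mathlib

open MvPolynomial

/-- Iterated partial derivative `∂^α/∂x^α` on a multivariate polynomial ring. -/
noncomputable def multiPD {σ : Type*} [Fintype σ] [DecidableEq σ] {K : Type*} [CommSemiring K]
    (α : σ → ℕ) : MvPolynomial σ K → MvPolynomial σ K :=
  fun f => Finset.univ.toList.foldr
    (fun i g => (⇑(MvPolynomial.pderiv (R := K) i))^[α i] g) f

/-- The `l`-th component of the universal Hasse-Schmidt derivation of
`A = K[x_1,…,x_s]` of order `n`. -/
noncomputable def hsDs (K : Type*) [CommRing K] (s n l : ℕ) :
    MvPolynomial (Fin s) K → MvPolynomial (Fin s × Fin (n + 1)) K :=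
  fun f => Polynomial.coeff
    (MvPolynomial.aeval
      (fun i : Fin s =>
        ∑ j : Fin (n + 1),
          Polynomial.C (MvPolynomial.X (i, j) : MvPolynomial (Fin s × Fin (n + 1)) K) *
            Polynomial.X ^ (j : ℕ)) f) l

/-!
The components of the universal Hasse-Schmidt derivation are the coefficients in `T` of the
substitution `x_i ↦ ∑_j x_i^{(j)} T^j`. Differentiating coefficientwise by `x_i^{(j)}`, the chain
rule gives `∂/∂x_i^{(j)} ∘ d_{m + j} = d_m ∘ ∂/∂x_i`. Both `λ_α` and `α̂` are additive in `α`, and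
`∂^{α + β} = ∂^α ∘ ∂^β`, so the multi-indices satisfying the identity form a submonoid containing
the unit vectors.
-/

theorem derivation_algHom_apply_eq_smul {σ R B M : Type*} [DecidableEq σ] [CommSemiring R]
    [CommSemiring B] [Algebra R B] [AddCommMonoid M] [Module B M] [Module R M]
    (D : Derivation R B M) (φ : MvPolynomial σ R →ₐ[R] B) {i : σ} {c : M}
    (h : ∀ k, D (φ (X k)) = (Pi.single i c : σ → M) k) (f : MvPolynomial σ R) :
    D (φ f) = φ (pderiv i f) • c := by
  induction f using MvPolynomial.induction_on with
  | C a => simp [← algebraMap_eq]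
  | add p q hp hq => simp only [map_add, add_smul, hp, hq]
  | mul_X p k hp =>
    have hX : D (φ (X k)) = φ (pderiv i (X k)) • c := by
      rw [h, pderiv_X]
      obtain rfl | hk := eq_or_ne k i <;> simp [*]
    simp only [map_mul, map_add, Derivation.leibniz, smul_eq_mul, add_smul, mul_smul, hp, hX]

section MultiPD

variable {σ R : Type*} [CommSemiring R]

theorem commute_pderiv (i j : σ) :
    Commute (pderiv (R := R) i).toLinearMap (pderiv j).toLinearMap := by
  obtain rfl | hij := eq_or_ne i j
  · exact Commute.refl _
  · refine LinearMap.ext fun f => MvPolynomial.ext _ _ fun m => ?_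
    simp [coeff_pderiv, hij, hij.symm, add_right_comm _ (Finsupp.single i 1), mul_right_comm]

/-- The action `α ↦ ∂^α/∂x^α` of the monoid of multi-indices on polynomials, from which the
additivity of `multiPD` in `α` is read off. Exponents are in `Multiplicative ℕ` because composition
of endomorphisms is written multiplicatively. -/
noncomputable def multiPDHom (σ R : Type*) [Fintype σ] [CommSemiring R] :
    (σ → Multiplicative ℕ) →* Module.End R (MvPolynomial σ R) :=
  MonoidHom.noncommPiCoprod (fun i => powersHom _ (pderiv i).toLinearMap)
    fun i j _ a b => (commute_pderiv i j).pow_pow a.toAdd b.toAdd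

variable [Fintype σ] [DecidableEq σ]

theorem multiPD_eq_multiPDHom (α : σ → ℕ) (f : MvPolynomial σ R) :
    multiPD α f = multiPDHom σ R (fun i => Multiplicative.ofAdd (α i)) f := by
  have hprod : multiPDHom σ R (fun i => Multiplicative.ofAdd (α i)) =
      (Finset.univ.toList.map fun i => (pderiv (R := R) i).toLinearMap ^ α i).prod := by
    rw [← Finset.noncommProd_toFinset _ _ (fun i _ j _ _ => (commute_pderiv i j).pow_pow _ _)
      (Finset.nodup_toList _)]
    simp only [Finset.toList_toFinset]
    rfl
  rw [hprod, multiPD]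
  induction (Finset.univ : Finset σ).toList with
  | nil => rfl
  | cons i L ih =>
    rw [List.foldr_cons, ih, List.map_cons, List.prod_cons, Module.End.mul_apply,
      Module.End.pow_apply, Derivation.coeFn_coe]

theorem multiPD_zero (f : MvPolynomial σ R) : multiPD 0 f = f := by
  rw [multiPD_eq_multiPDHom]
  exact DFunLike.congr_fun (map_one (multiPDHom σ R)) f

theorem multiPD_add (α β : σ → ℕ) (f : MvPolynomial σ R) :
    multiPD (α + β) f = multiPD α (multiPD β f) := by
  simp only [multiPD_eq_multiPDHom]
  exact DFunLike.congr_fun (map_mul (multiPDHom σ R) _ _) f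

theorem multiPD_single_one (i : σ) (f : MvPolynomial σ R) :
    multiPD (Pi.single i 1) f = pderiv i f := by
  have hsingle : multiPDHom σ R (Pi.mulSingle i (Multiplicative.ofAdd 1)) =
      (pderiv i).toLinearMap :=
    (MonoidHom.noncommPiCoprod_mulSingle _ i _).trans (pow_one _)
  rw [multiPD_eq_multiPDHom]
  exact DFunLike.congr_fun hsingle f

end MultiPD

section MultiIndex

variable {σ ι : Type*}

theorem multiIndex_induction [Finite σ] [DecidableEq σ] {p : (σ → ℕ) → Prop} (zero : p 0)
    (add : ∀ α β, p α → p β → p (α + β)) (single_one : ∀ i, p (Pi.single i 1)) (α : σ → ℕ) :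
    p α := by
  induction α using Pi.single_induction with
  | zero => exact zero
  | add α β hα hβ => exact add α β hα hβ
  | single i a =>
    induction a with
    | zero => rwa [Pi.single_zero]
    | succ a ih => rw [Pi.single_add]; exact add _ _ ih (single_one i)

/-- The multi-index `α̂` in the variables `x_i` obtained from a multi-index `α` in the `x_i^{(j)}`
by forgetting the orders `j`. It is additive in `α`, hence bundled. -/
def forgetOrder [Fintype ι] : (σ × ι → ℕ) →+ (σ → ℕ) where
  toFun α i := ∑ j, α (i, j)
  map_zero' := by ext; simp
  map_add' α β := by ext; simp [Finset.sum_add_distrib]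

theorem forgetOrder_apply [Fintype ι] (α : σ × ι → ℕ) :
    forgetOrder α = fun i => ∑ j, α (i, j) :=
  rfl

theorem forgetOrder_single [Fintype ι] [DecidableEq σ] [DecidableEq ι] (p : σ × ι) (a : ℕ) :
    forgetOrder (Pi.single p a) = Pi.single p.1 a := by
  ext i
  obtain ⟨k, j⟩ := p
  obtain rfl | hi := eq_or_ne i k <;> simp [forgetOrder_apply, Pi.single_apply, *]

/-- The weight `λ_α` of a multi-index `α` in the variables `x_i^{(j)}`, where `x_i^{(j)}` has
weight `j`. It is additive in `α`, hence bundled. -/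
def orderWeight [Fintype σ] {n : ℕ} : (σ × Fin (n + 1) → ℕ) →+ ℕ where
  toFun α := ∑ p, (p.2 : ℕ) * α p
  map_zero' := by simp
  map_add' α β := by simp [mul_add, Finset.sum_add_distrib]

theorem orderWeight_apply [Fintype σ] {n : ℕ} (α : σ × Fin (n + 1) → ℕ) :
    orderWeight α = ∑ p, (p.2 : ℕ) * α p :=
  rfl

theorem orderWeight_single [Fintype σ] [DecidableEq σ] {n : ℕ} (p : σ × Fin (n + 1)) (a : ℕ) :
    orderWeight (Pi.single p a) = p.2 * a := by
  simp [orderWeight_apply, Pi.single_apply]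

end MultiIndex

section HasseSchmidt

/-- The universal Hasse-Schmidt derivation of order `n` as the algebra homomorphism
`x_i ↦ ∑_j x_i^{(j)} T^j`, whose coefficient at `T^l` is `d_l`. As in `hsDs`, powers of `T` above
`n` are kept rather than truncated. -/
noncomputable def hsTaylor (σ R : Type*) [CommSemiring R] (n : ℕ) :
    MvPolynomial σ R →ₐ[R] Polynomial (MvPolynomial (σ × Fin (n + 1)) R) :=
  aeval fun i => ∑ j : Fin (n + 1), Polynomial.C (X (i, j)) * Polynomial.X ^ (j : ℕ)

theorem hsDs_eq_coeff_hsTaylor {K : Type*} [CommRing K] {s n : ℕ} (l : ℕ)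
    (f : MvPolynomial (Fin s) K) : hsDs K s n l f = (hsTaylor (Fin s) K n f).coeff l :=
  rfl

variable {σ R : Type*} [CommRing R] {n : ℕ}

theorem mapCoeffs_pderiv_hsTaylor_X [DecidableEq σ] (p : σ × Fin (n + 1)) (i : σ) :
    (pderiv p).mapCoeffs (hsTaylor σ R n (X i)) =
      (Pi.single p.1 (PolynomialModule.single _ (p.2 : ℕ) 1) : σ → PolynomialModule _ _) i := by
  obtain ⟨k, j⟩ := p
  simp only [hsTaylor, aeval_X, map_sum, Polynomial.C_mul_X_pow_eq_monomial,
    Derivation.mapCoeffs_monomial, pderiv_X]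
  obtain rfl | hi := eq_or_ne i k
  · simp [Pi.single_apply, apply_ite (PolynomialModule.single _ _)]
  · simp [hi]

theorem pderiv_coeff_hsTaylor (p : σ × Fin (n + 1)) (m : ℕ) (f : MvPolynomial σ R) :
    pderiv p ((hsTaylor σ R n f).coeff (m + p.2)) = (hsTaylor σ R n (pderiv p.1 f)).coeff m := by
  classical
  rw [← Derivation.mapCoeffs_apply,
    derivation_algHom_apply_eq_smul _ _ (mapCoeffs_pderiv_hsTaylor_X p),
    PolynomialModule.smul_single_apply]
  simp

variable [Fintype σ] [DecidableEq σ]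

theorem multiPD_hsDs_general (α : σ × Fin (n + 1) → ℕ) (m : ℕ) (f : MvPolynomial σ R) :
    multiPD α ((hsTaylor σ R n f).coeff (m + orderWeight α)) =
      (hsTaylor σ R n (multiPD (forgetOrder α) f)).coeff m := by
  induction α using multiIndex_induction generalizing m f with
  | zero => simp only [map_zero, add_zero, multiPD_zero]
  | add α β hα hβ =>
    rw [map_add, map_add, multiPD_add, multiPD_add, ← add_assoc, hβ, hα]
  | single_one p =>
    rw [orderWeight_single, mul_one, forgetOrder_single, multiPD_single_one, multiPD_single_one,
      pderiv_coeff_hsTaylor]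

end HasseSchmidt

/-- For a multi-index `α ∈ ℕ^{s(n+1)}` with `λ_α = ∑_{i,j} j·α_i^j ≤ l ≤ n` and
`α̂_i = ∑_j α_i^j`, the operator identity
`(∂^α/∂x^α) ∘ d_l = d_{l−λ_α} ∘ (∂^{α̂}/∂x^{α̂})` holds as maps on `K[x_1,…,x_s]`. -/
theorem multiPD_hsDs (K : Type*) [Field K] (s n : ℕ)
    (α : Fin s × Fin (n + 1) → ℕ) (l : ℕ)
    (hlam : (∑ p : Fin s × Fin (n + 1), (p.2 : ℕ) * α p) ≤ l) (hln : l ≤ n)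
    (f : MvPolynomial (Fin s) K) :
    multiPD α (hsDs K s n l f) =
      hsDs K s n (l - ∑ p : Fin s × Fin (n + 1), (p.2 : ℕ) * α p)
        (multiPD (fun i : Fin s => ∑ j : Fin (n + 1), α (i, j)) f) := by
  simpa only [hsDs_eq_coeff_hsTaylor, orderWeight_apply, forgetOrder_apply,
    Nat.sub_add_cancel hlam] using multiPD_hsDs_general α (l - orderWeight α) f
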